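/- Let (S, f) be a Frobenius GNS in ℕ_0^d of type t and let ≺ be any monomial order on ℕ_0^d. Write PF(S) ∖ {f} = {x_1 ≺ x_2 ≺ ⋯ ≺ x_{t−1}}, the elements listed in ≺-increasing order. Then S is almost symmetric if and only if x_i + x_{t−i} = f for every i ∈ {1,…,t−1}. -/

import Mathlib

open scoped BigOperators

/-- A generalized numerical semigroup: a submonoid of `ℕ^d` with finite complement. -/
def IsGNS {d : ℕ} (S : Set (Fin d → ℕ)) : Prop :=
  (0 : Fin d → ℕ) ∈ S ∧ (∀ x y : Fin d → ℕ, x ∈ S → y ∈ S → x + y ∈ S) ∧ Sᶜ.Finite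

/-- The genus: number of gaps. -/
noncomputable def genus {d : ℕ} (S : Set (Fin d → ℕ)) : ℕ := Sᶜ.ncard

/-- Pseudo-Frobenius elements. -/
def PF {d : ℕ} (S : Set (Fin d → ℕ)) : Set (Fin d → ℕ) :=
  {h | h ∉ S ∧ ∀ s ∈ S, s ≠ 0 → h + s ∈ S}

/-- The type: number of pseudo-Frobenius elements. -/
noncomputable def typ {d : ℕ} (S : Set (Fin d → ℕ)) : ℕ := (PF S).ncard

/-- Maximal elements of a set with respect to a relation. -/
def Maximals {α : Type*} (le : α → α → Prop) (X : Set α) : Set α :=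
  {x ∈ X | ∀ y ∈ X, le x y → x = y}

/-- `f` is the unique maximal element of the set of gaps w.r.t. the componentwise order. -/
def IsFrobenius {d : ℕ} (S : Set (Fin d → ℕ)) (f : Fin d → ℕ) : Prop :=
  Maximals (· ≤ ·) Sᶜ = {f}

/-- Almost symmetric: `2 g(S) + 1 - t(S) = ∏ (h i + 1)` for some gap `h`. -/
def AlmostSymmetric {d : ℕ} (S : Set (Fin d → ℕ)) : Prop :=
  ∃ h ∉ S, 2 * genus S + 1 = typ S + ∏ i, (h i + 1)

/-- Special gaps. -/
def SG {d : ℕ} (S : Set (Fin d → ℕ)) : Set (Fin d → ℕ) :=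
  {h ∈ PF S | h + h ∈ S}

/-- The partial order `≤_S` : `y ≤_S x` iff `x - y ∈ S`. -/
def leS {d : ℕ} (S : Set (Fin d → ℕ)) (x y : Fin d → ℕ) : Prop :=
  ∃ s ∈ S, x + s = y

/-- The Apéry set of `S` with respect to `n`. -/
def Ap {d : ℕ} (S : Set (Fin d → ℕ)) (n : Fin d → ℕ) : Set (Fin d → ℕ) :=
  {s ∈ S | ¬ ∃ u ∈ S, u + n = s}

/-- The reduced Apéry set of `S` with respect to `n`. -/
def Cred {d : ℕ} (S : Set (Fin d → ℕ)) (n : Fin d → ℕ) : Set (Fin d → ℕ) :=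
  {s ∈ Ap S n | ∃ h, h ∉ S ∧ s ≤ h + n}

/-- A monomial order on `ℕ^d` given by its strict-order relation. -/
def IsMonomialOrder (d : ℕ) (lt : (Fin d → ℕ) → (Fin d → ℕ) → Prop) : Prop :=
  (∀ a, ¬ lt a a) ∧ (∀ a b c, lt a b → lt b c → lt a c) ∧
  (∀ a b, a ≠ b → lt a b ∨ lt b a) ∧
  (∀ u a b, lt a b → lt (a + u) (b + u)) ∧
  (∀ a, a ≠ (0 : Fin d → ℕ) → lt 0 a)

/-- Minimal generator of a GNS. -/
def IsMinGen {d : ℕ} (S : Set (Fin d → ℕ)) (x : Fin d → ℕ) : Prop :=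
  x ∈ S ∧ x ≠ 0 ∧ ∀ y ∈ S, ∀ z ∈ S, y ≠ 0 → z ≠ 0 → y + z ≠ x

/-- Irreducible GNS: not an intersection of two GNSs properly containing it. -/
def GNSIrreducible {d : ℕ} (S : Set (Fin d → ℕ)) : Prop :=
  ¬ ∃ S₁ S₂ : Set (Fin d → ℕ), IsGNS S₁ ∧ IsGNS S₂ ∧ S ⊂ S₁ ∧ S ⊂ S₂ ∧ S = S₁ ∩ S₂

/-- Pseudo-symmetric: `PF S = {f, f/2}`. -/
def PseudoSymmetric {d : ℕ} (S : Set (Fin d → ℕ)) : Prop :=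
  ∃ f q : Fin d → ℕ, f ≠ q ∧ q + q = f ∧ PF S = {f, q}

/-!
Let `f` be the Frobenius element. Gaps lie below `f`, and since `h + (f - h) = f ∉ S`, the gaps and
their reflections under `h ↦ f - h` cover the box `[0, f]`. By inclusion–exclusion
`2 g(S) = ∏ (f i + 1) + |L|`, where `L` is the set of gaps `h` whose reflection `f - h` is again a
gap. As `PF(S) ∖ {f} ⊆ L`, and the box of any other gap is no larger than that of `f`, almost
symmetry amounts to `L = PF(S) ∖ {f}`; because `L` is invariant under the reflection and every gap
is `≤_S` some pseudo-Frobenius element, this says exactly that `PF(S) ∖ {f}` is invariant under the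
reflection. The reflection reverses a translation-invariant order, so on an increasing enumeration
it acts as the reversal of indices.
-/

open Set

section Reversal

theorem add_eq_of_strictAntiOn_Icc {a b : ℕ} {σ : ℕ → ℕ} (hmaps : MapsTo σ (Icc a b) (Icc a b))
    (hanti : StrictAntiOn σ (Icc a b)) {i : ℕ} (hi : i ∈ Icc a b) : i + σ i = a + b := by
  have hσi := hmaps hi
  have card_above : (Finset.Ioc i b).card ≤ (Finset.Ico a (σ i)).card := by
    have hsub : (Finset.Ioc i b : Set ℕ) ⊆ Icc a b := by
      rw [Finset.coe_Ioc]
      exact Ioc_subset_Icc_self.trans (Icc_subset_Icc_left hi.1)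
    refine Finset.card_le_card_of_injOn σ (fun j hj ↦ ?_) (hanti.injOn.mono hsub)
    exact Finset.mem_Ico.2 ⟨(hmaps (hsub hj)).1, hanti hi (hsub hj) (Finset.mem_Ioc.1 hj).1⟩
  have card_below : (Finset.Ico a i).card ≤ (Finset.Ioc (σ i) b).card := by
    have hsub : (Finset.Ico a i : Set ℕ) ⊆ Icc a b := by
      rw [Finset.coe_Ico]
      exact Ico_subset_Icc_self.trans (Icc_subset_Icc_right hi.2)
    refine Finset.card_le_card_of_injOn σ (fun j hj ↦ ?_) (hanti.injOn.mono hsub)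
    exact Finset.mem_Ioc.2 ⟨hanti (hsub hj) hi (Finset.mem_Ico.1 hj).2, (hmaps (hsub hj)).2⟩
  rw [Nat.card_Ioc, Nat.card_Ico] at card_above card_below
  grind

variable {M : Type*} [AddCommSemigroup M] {r : M → M → Prop} [IsStrictOrder M r]

theorem lt_of_add_eq_add_of_increasing {ι : Type*} [LinearOrder ι] {I : Set ι} {x : ι → M}
    (hadd : ∀ u v w, r v w → r (v + u) (w + u))
    (hx : ∀ i ∈ I, ∀ j ∈ I, i < j → r (x i) (x j))
    {i j k l : ι} (hi : i ∈ I) (hj : j ∈ I) (hk : k ∈ I) (hl : l ∈ I)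
    (hij : i < j) (h : x i + x k = x j + x l) : l < k := by
  by_contra! hkl
  have hlt : r (x j + x l) (x j + x k) := h ▸ hadd (x k) _ _ (hx i hi j hj hij)
  rcases hkl.eq_or_lt with rfl | hkl
  · exact irrefl_of r _ hlt
  · have hgt : r (x j + x k) (x j + x l) := by
      simpa only [add_comm (x j)] using hadd (x j) _ _ (hx k hk l hl hkl)
    exact irrefl_of r _ (trans_of r hlt hgt)

theorem forall_mem_image_exists_add_eq_iff {a b : ℕ} {x : ℕ → M}
    (hadd : ∀ u v w, r v w → r (v + u) (w + u))
    (hx : ∀ i ∈ Icc a b, ∀ j ∈ Icc a b, i < j → r (x i) (x j)) (f : M) :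
    (∀ y ∈ x '' Icc a b, ∃ z ∈ x '' Icc a b, y + z = f) ↔
      ∀ i ∈ Icc a b, x i + x (a + b - i) = f := by
  simp only [forall_mem_image, exists_mem_image]
  constructor
  · intro h
    choose! σ hmaps hsum using h
    have hanti : StrictAntiOn σ (Icc a b) := fun i hi j hj hij ↦
      lt_of_add_eq_add_of_increasing hadd hx hi hj (hmaps hi) (hmaps hj) hij
        ((hsum hi).trans (hsum hj).symm)
    intro i hi
    have hσ := add_eq_of_strictAntiOn_Icc hmaps hanti hi
    rw [← hσ, Nat.add_sub_cancel_left]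
    exact hsum hi
  · intro h i hi
    exact ⟨a + b - i, ⟨by grind, by grind⟩, h i hi⟩

end Reversal

section Gaps

variable {d : ℕ} {S : Set (Fin d → ℕ)} {f : Fin d → ℕ}

theorem IsMonomialOrder.isStrictOrder {lt : (Fin d → ℕ) → (Fin d → ℕ) → Prop}
    (hlt : IsMonomialOrder d lt) : IsStrictOrder (Fin d → ℕ) lt where
  irrefl := hlt.1
  trans := hlt.2.1

theorem IsFrobenius.notMem (hf : IsFrobenius S f) : f ∉ S :=
  (hf ▸ mem_singleton f : f ∈ Maximals (· ≤ ·) Sᶜ).1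

theorem IsFrobenius.le_of_notMem (hf : IsFrobenius S f) (hS : IsGNS S) {h : Fin d → ℕ}
    (hh : h ∉ S) : h ≤ f := by
  obtain ⟨m, hhm, hm⟩ := hS.2.2.exists_le_maximal (mem_compl hh)
  have hmf : m ∈ Maximals (· ≤ ·) Sᶜ := ⟨hm.1, fun _ hy hmy ↦ hm.eq_of_le hy hmy⟩
  rw [hf, mem_singleton_iff] at hmf
  exact hmf ▸ hhm

theorem IsFrobenius.mem_PF (hf : IsFrobenius S f) (hS : IsGNS S) : f ∈ PF S := by
  refine ⟨hf.notMem, fun s _ hs0 ↦ ?_⟩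
  by_contra hfs
  exact hs0 (nonpos_iff_eq_zero.1 (add_le_iff_nonpos_right f |>.1 (hf.le_of_notMem hS hfs)))

theorem IsGNS.exists_add_mem_PF (hS : IsGNS S) {h : Fin d → ℕ} (hh : h ∉ S) :
    ∃ s ∈ S, h + s ∈ PF S := by
  have hfin : {p ∈ Sᶜ | leS S h p}.Finite := hS.2.2.subset (sep_subset _ _)
  obtain ⟨_, -, ⟨hm, s, hs, rfl⟩, hmax⟩ :=
    hfin.exists_le_maximal (a := h) ⟨hh, 0, hS.1, add_zero h⟩
  refine ⟨s, hs, hm, fun u hu hu0 ↦ ?_⟩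
  by_contra hgap
  have hle : h + s + u ≤ h + s :=
    hmax ⟨hgap, s + u, hS.2.1 s u hs hu, (add_assoc h s u).symm⟩ le_self_add
  exact hu0 (nonpos_iff_eq_zero.1 (add_le_iff_nonpos_right _ |>.1 hle))

theorem IsGNS.finite_PF (hS : IsGNS S) : (PF S).Finite :=
  hS.2.2.subset fun _ hh ↦ hh.1

theorem IsFrobenius.ncard_PF_diff_add_one (hf : IsFrobenius S f) (hS : IsGNS S) :
    (PF S \ {f}).ncard + 1 = typ S :=
  ncard_sdiff_singleton_add_one (hf.mem_PF hS) hS.finite_PF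

/-- The gaps of the second kind: those gaps `h` whose reflection `f - h` is again a gap. The
subtraction is truncated, which is harmless when `f` is the Frobenius element of a GNS, since then
all gaps lie below `f`. -/
def gapsSecondKind (S : Set (Fin d → ℕ)) (f : Fin d → ℕ) : Set (Fin d → ℕ) :=
  {h | h ∉ S ∧ f - h ∉ S}

theorem IsGNS.finite_gapsSecondKind (hS : IsGNS S) : (gapsSecondKind S f).Finite :=
  hS.2.2.subset fun _ hh ↦ hh.1

theorem IsFrobenius.sub_mem_gapsSecondKind (hf : IsFrobenius S f) (hS : IsGNS S)
    {h : Fin d → ℕ} (hh : h ∈ gapsSecondKind S f) : f - h ∈ gapsSecondKind S f :=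
  ⟨hh.2, by rw [tsub_tsub_cancel_of_le (hf.le_of_notMem hS hh.1)]; exact hh.1⟩

theorem IsFrobenius.PF_diff_subset_gapsSecondKind (hf : IsFrobenius S f) (hS : IsGNS S) :
    PF S \ {f} ⊆ gapsSecondKind S f := by
  rintro h ⟨⟨hh, hPF⟩, hne⟩
  refine ⟨hh, fun hmem ↦ hf.notMem ?_⟩
  have hadd : h + (f - h) = f := add_tsub_cancel_of_le (hf.le_of_notMem hS hh)
  have hne0 : f - h ≠ 0 := fun h0 ↦ hne (by rwa [h0, add_zero] at hadd)
  exact hadd ▸ hPF _ hmem hne0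

theorem IsFrobenius.gaps_union_image_sub (hf : IsFrobenius S f) (hS : IsGNS S) :
    Sᶜ ∪ (f - ·) '' Sᶜ = Iic f := by
  ext h
  constructor
  · rintro (hh | ⟨k, -, rfl⟩)
    · exact hf.le_of_notMem hS hh
    · exact tsub_le_self (α := Fin d → ℕ)
  · intro (hle : h ≤ f)
    by_cases hh : h ∈ S
    · refine Or.inr ⟨f - h, fun hmem ↦ hf.notMem ?_, tsub_tsub_cancel_of_le hle⟩
      exact add_tsub_cancel_of_le hle ▸ hS.2.1 _ _ hh hmem
    · exact Or.inl hh

theorem IsFrobenius.gaps_inter_image_sub (hf : IsFrobenius S f) (hS : IsGNS S) :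
    Sᶜ ∩ (f - ·) '' Sᶜ = gapsSecondKind S f := by
  ext h
  constructor
  · rintro ⟨hh, k, hk, rfl⟩
    refine ⟨hh, ?_⟩
    rwa [tsub_tsub_cancel_of_le (hf.le_of_notMem hS hk)]
  · rintro ⟨hh, hsub⟩
    exact ⟨hh, f - h, hsub, tsub_tsub_cancel_of_le (hf.le_of_notMem hS hh)⟩

theorem ncard_Iic_pi_nat {ι : Type*} [Fintype ι] (f : ι → ℕ) :
    (Iic f).ncard = ∏ i, (f i + 1) := by
  classical
  rw [← Finset.coe_Iic, ncard_coe_finset, Pi.card_Iic]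
  simp only [Nat.card_Iic]

theorem IsFrobenius.two_mul_genus_eq (hf : IsFrobenius S f) (hS : IsGNS S) :
    2 * genus S = ∏ i, (f i + 1) + (gapsSecondKind S f).ncard := by
  have hinj : InjOn (f - ·) Sᶜ := fun h hh k hk heq ↦
    (tsub_right_inj (hf.le_of_notMem hS hh) (hf.le_of_notMem hS hk)).1 heq
  calc 2 * genus S = Sᶜ.ncard + ((f - ·) '' Sᶜ).ncard := by
        rw [hinj.ncard_image, genus, two_mul]
    _ = (Sᶜ ∪ (f - ·) '' Sᶜ).ncard + (Sᶜ ∩ (f - ·) '' Sᶜ).ncard :=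
        (ncard_union_add_ncard_inter _ _ hS.2.2 (hS.2.2.image _)).symm
    _ = ∏ i, (f i + 1) + (gapsSecondKind S f).ncard := by
        rw [hf.gaps_union_image_sub hS, hf.gaps_inter_image_sub hS, ncard_Iic_pi_nat]

theorem IsFrobenius.almostSymmetric_iff_gapsSecondKind_eq (hf : IsFrobenius S f) (hS : IsGNS S) :
    AlmostSymmetric S ↔ gapsSecondKind S f = PF S \ {f} := by
  have hgenus := hf.two_mul_genus_eq hS
  have htyp := hf.ncard_PF_diff_add_one hS
  constructor
  · rintro ⟨h, hh, heq⟩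
    have hprod : ∏ i, (h i + 1) ≤ ∏ i, (f i + 1) :=
      Finset.prod_le_prod' fun i _ ↦ Nat.succ_le_succ (hf.le_of_notMem hS hh i)
    exact (eq_of_subset_of_ncard_le (hf.PF_diff_subset_gapsSecondKind hS) (by omega)
      hS.finite_gapsSecondKind).symm
  · intro heq
    rw [heq] at hgenus
    exact ⟨f, hf.notMem, by omega⟩

theorem eq_zero_of_mem_gapsSecondKind {h s z : Fin d → ℕ}
    (hh : h ∈ gapsSecondKind S f) (hs : s ∈ S) (hz : z ∈ PF S) (hsum : h + s + z = f) :
    s = 0 := by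
  by_contra hs0
  have hsub : f - h = z + s := by rw [← hsum, add_assoc, add_tsub_cancel_left, add_comm]
  exact hh.2 (hsub ▸ hz.2 s hs hs0)

theorem IsFrobenius.almostSymmetric_iff_forall_exists_add_eq (hf : IsFrobenius S f)
    (hS : IsGNS S) :
    AlmostSymmetric S ↔ ∀ y ∈ PF S \ {f}, ∃ z ∈ PF S \ {f}, y + z = f := by
  rw [hf.almostSymmetric_iff_gapsSecondKind_eq hS]
  constructor
  · intro heq y hy
    rw [← heq] at hy ⊢
    exact ⟨f - y, hf.sub_mem_gapsSecondKind hS hy,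
      add_tsub_cancel_of_le (hf.le_of_notMem hS hy.1)⟩
  · intro hsymm
    refine Subset.antisymm (fun h hh ↦ ?_) (hf.PF_diff_subset_gapsSecondKind hS)
    obtain ⟨s, hs, hPF⟩ := hS.exists_add_mem_PF hh.1
    have hne : h + s ≠ f := by
      rintro rfl
      exact hh.2 (by rwa [add_tsub_cancel_left])
    obtain ⟨z, hz, hsum⟩ := hsymm (h + s) ⟨hPF, hne⟩
    have hs0 : s = 0 := eq_zero_of_mem_gapsSecondKind hh hs hz.1 hsum
    rw [hs0, add_zero] at hPF hne
    exact ⟨hPF, hne⟩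

end Gaps

theorem statement8_general {d : ℕ} {S : Set (Fin d → ℕ)} (hS : IsGNS S)
    {f : Fin d → ℕ} (hf : IsFrobenius S f)
    (lt : (Fin d → ℕ) → (Fin d → ℕ) → Prop) [IsStrictOrder (Fin d → ℕ) lt]
    (hadd : ∀ u a b, lt a b → lt (a + u) (b + u)) (x : ℕ → (Fin d → ℕ))
    (hinc : ∀ i j, 1 ≤ i → i < j → j ≤ typ S - 1 → lt (x i) (x j))
    (henum : PF S \ {f} = x '' Icc 1 (typ S - 1)) :
    AlmostSymmetric S ↔ ∀ i, 1 ≤ i → i ≤ typ S - 1 → x i + x (typ S - i) = f := by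
  have htyp : 1 + (typ S - 1) = typ S := by
    have := hf.ncard_PF_diff_add_one hS
    omega
  rw [hf.almostSymmetric_iff_forall_exists_add_eq hS, henum,
    forall_mem_image_exists_add_eq_iff hadd (fun i hi j hj hij ↦ hinc i j hi.1 hij hj.2), htyp]
  simp only [mem_Icc, and_imp]

/-- For a Frobenius GNS `(S, f)` of type `t`, a monomial order `≺` and
`PF(S) ∖ {f} = {x_1 ≺ ⋯ ≺ x_{t-1}}`, `S` is almost symmetric iff
`x_i + x_{t-i} = f` for all `i ∈ {1,…,t-1}`. -/
theorem statement8 (d : ℕ) (hd : 0 < d) (S : Set (Fin d → ℕ)) (hS : IsGNS S)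
    (f : Fin d → ℕ) (hf : IsFrobenius S f)
    (lt : (Fin d → ℕ) → (Fin d → ℕ) → Prop) (hlt : IsMonomialOrder d lt)
    (t : ℕ) (ht : typ S = t)
    (x : ℕ → (Fin d → ℕ))
    (hinc : ∀ i j, 1 ≤ i → i < j → j ≤ t - 1 → lt (x i) (x j))
    (henum : PF S \ {f} = x '' Set.Icc 1 (t - 1)) :
    AlmostSymmetric S ↔ ∀ i, 1 ≤ i → i ≤ t - 1 → x i + x (t - i) = f := by
  have := hlt.isStrictOrder
  subst ht
  exact statement8_general hS hf lt hlt.2.2.2.1 x hinc henum
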